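/- In the transverse p-spin model with p ≥ 2, for every N ≥ p, β > 0, J > 0 and b ≥ 0, setting α_p(N) = N!/((N−p)!·N^p), the disorder mean of the Gibbs expectation of the p-th power of the replica-overlap operator satisfies 0 ≤ E[⟨R_N^p⟩⊗] − α_p(N) · E[⟨S_1^z S_2^z ⋯ S_p^z⟩²] ≤ 1 − α_p(N). -/

import Mathlib

open Matrix MeasureTheory ProbabilityTheory
open scoped Kronecker

noncomputable section

abbrev Conf (N : ℕ) := Fin N → Fin 2

def Sz (N : ℕ) (j : Fin N) : Matrix (Conf N) (Conf N) ℂ :=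
  Matrix.diagonal fun σ => if σ j = 0 then 1 else -1

def Sx (N : ℕ) (j : Fin N) : Matrix (Conf N) (Conf N) ℂ :=
  Matrix.of fun σ τ => if τ = Function.update σ j (1 - σ j) then 1 else 0

/-- The product `S^z_{j_1} S^z_{j_2} ⋯ S^z_{j_p}` over an index set `s`. -/
def SzProd (N : ℕ) (s : Finset (Fin N)) : Matrix (Conf N) (Conf N) ℂ :=
  Matrix.diagonal fun σ => ∏ j ∈ s, (if σ j = 0 then (1 : ℂ) else -1)

/-- The zero-field `p`-spin Hamiltonian
`U_N = −√(p!/(2N^{p−1})) Σ_{j_1<⋯<j_p} g_{j_1⋯j_p} S^z_{j_1} ⋯ S^z_{j_p}`. -/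
def UNp (N p : ℕ) (g : Finset (Fin N) → ℝ) : Matrix (Conf N) (Conf N) ℂ :=
  (-(Real.sqrt ((Nat.factorial p : ℝ) / (2 * (N : ℝ) ^ (p - 1))))) •
    ∑ s : Finset (Fin N), if s.card = p then g s • SzProd N s else 0

/-- The transverse `p`-spin Hamiltonian `H_N = J·U_N − b·Σ_j S_j^x`. -/
def HNp (N p : ℕ) (J b : ℝ) (g : Finset (Fin N) → ℝ) : Matrix (Conf N) (Conf N) ℂ :=
  J • UNp N p g - b • ∑ j : Fin N, Sx N j

/-- Gibbs expectation (real part of the trace ratio). -/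
def gibbs {n : Type*} [Fintype n] [DecidableEq n] (β : ℝ) (H A : Matrix n n ℂ) : ℝ :=
  ((NormedSpace.exp ((-β) • H) * A).trace / (NormedSpace.exp ((-β) • H)).trace).re

/-- The replica-overlap operator `R_N = N⁻¹ Σ_j S_j^z ⊗ S_j^z` on `ℋ_N ⊗ ℋ_N`. -/
def RN (N : ℕ) : Matrix (Conf N × Conf N) (Conf N × Conf N) ℂ :=
  ((N : ℝ)⁻¹) • ∑ j : Fin N, (Sz N j) ⊗ₖ (Sz N j)

/-- The duplicated Hamiltonian `H_N ⊗ 1 + 1 ⊗ H_N`. -/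
def Hdup (N p : ℕ) (J b : ℝ) (g : Finset (Fin N) → ℝ) :
    Matrix (Conf N × Conf N) (Conf N × Conf N) ℂ :=
  (HNp N p J b g) ⊗ₖ (1 : Matrix (Conf N) (Conf N) ℂ)
    + (1 : Matrix (Conf N) (Conf N) ℂ) ⊗ₖ (HNp N p J b g)

/-- `α_p(N) = N!/((N−p)!·N^p)`. -/
def alphaP (N p : ℕ) : ℝ :=
  (Nat.factorial N : ℝ) / ((Nat.factorial (N - p) : ℝ) * (N : ℝ) ^ p)

/-- The index set `{1, …, p}` of the first `p` spins. -/
def firstP (N p : ℕ) : Finset (Fin N) := Finset.univ.filter fun j : Fin N => (j : ℕ) < p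

def sg {N : ℕ} (σ : Conf N) (j : Fin N) : ℝ := if σ j = 0 then 1 else -1

lemma sg_cast {N : ℕ} (σ : Conf N) (j : Fin N) :
    (if σ j = 0 then (1 : ℂ) else -1) = ((sg σ j : ℝ) : ℂ) := by
  unfold sg; split_ifs <;> simp

def DD {n : Type*} [Fintype n] [DecidableEq n] (β : ℝ) (H : Matrix n n ℂ) (σ : n) : ℝ :=
  (NormedSpace.exp ((-β) • H) σ σ).re

def Ev {n : Type*} [Fintype n] [DecidableEq n] (β : ℝ) (H : Matrix n n ℂ) (a : n → ℝ) : ℝ :=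
  (∑ σ, DD β H σ * a σ) / ∑ σ, DD β H σ

lemma herm_smul {n : Type*} (c : ℝ) {H : Matrix n n ℂ} (h : H.IsHermitian) :
    (c • H).IsHermitian := by
  unfold Matrix.IsHermitian at *
  rw [conjTranspose_smul, h]; simp

lemma exp_diag_real {n : Type*} [Fintype n] [DecidableEq n] (β : ℝ) {H : Matrix n n ℂ}
    (h : H.IsHermitian) (σ : n) : NormedSpace.exp ((-β) • H) σ σ = (DD β H σ : ℂ) := by
  have := (herm_smul (-β) h).exp
  exact (this.coe_re_apply_self σ).symm

lemma DD_nonneg {n : Type*} [Fintype n] [DecidableEq n] (β : ℝ) {H : Matrix n n ℂ}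
    (h : H.IsHermitian) (σ : n) : 0 ≤ DD β H σ := by
  have h1 := (herm_smul (-β / 2) h).exp
  have h2 : NormedSpace.exp ((-β) • H) =
      (NormedSpace.exp ((-β / 2) • H)) * (NormedSpace.exp ((-β / 2) • H))ᴴ := by
    rw [h1.eq, ← Matrix.exp_add_of_commute _ _ (Commute.refl _), ← add_smul]
    congr 2; ring
  unfold DD
  rw [h2, Matrix.mul_apply, Complex.re_sum]
  refine Finset.sum_nonneg fun j _ => ?_
  rw [Matrix.conjTranspose_apply]
  simp only [RCLike.star_def, Complex.mul_conj, Complex.ofReal_re]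
  exact Complex.normSq_nonneg _

lemma gibbs_diag {n : Type*} [Fintype n] [DecidableEq n] (β : ℝ) {H : Matrix n n ℂ}
    (h : H.IsHermitian) (a : n → ℝ) :
    gibbs β H (diagonal fun σ => (a σ : ℂ)) = Ev β H a := by
  unfold gibbs Ev Matrix.trace
  simp only [Matrix.diag_apply, Matrix.mul_diagonal, exp_diag_real β h]
  norm_cast

lemma Ev_abs_le {n : Type*} [Fintype n] [DecidableEq n] (β : ℝ) {H : Matrix n n ℂ}
    (h : H.IsHermitian) (a : n → ℝ) (ha : ∀ σ, |a σ| ≤ 1) : |Ev β H a| ≤ 1 := by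
  unfold Ev
  have h0 : 0 ≤ ∑ σ, DD β H σ := Finset.sum_nonneg fun σ _ => DD_nonneg β h σ
  rw [abs_div, abs_of_nonneg h0]
  refine div_le_one_of_le₀ ?_ h0
  refine (Finset.abs_sum_le_sum_abs _ _).trans (Finset.sum_le_sum fun σ _ => ?_)
  rw [abs_mul, abs_of_nonneg (DD_nonneg β h σ)]
  exact mul_le_of_le_one_right (DD_nonneg β h σ) (ha σ)

lemma map_exp_matrix {m n : Type*} [Fintype n] [DecidableEq n] [Fintype m] [DecidableEq m]
    (f : Matrix m m ℂ →+* Matrix n n ℂ) (hf : Continuous f) (A : Matrix m m ℂ) :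
    f (NormedSpace.exp A) = NormedSpace.exp (f A) :=
  open scoped Norms.Operator in NormedSpace.map_exp f hf A

lemma exp_kron_one {n : Type*} [Fintype n] [DecidableEq n] (A : Matrix n n ℂ) :
    NormedSpace.exp (A ⊗ₖ (1 : Matrix n n ℂ)) = NormedSpace.exp A ⊗ₖ (1 : Matrix n n ℂ) := by
  let f : Matrix n n ℂ →+* Matrix (n × n) (n × n) ℂ :=
    { toFun := fun A => A ⊗ₖ (1 : Matrix n n ℂ)
      map_one' := by simp
      map_mul' := fun A B => by rw [← Matrix.mul_kronecker_mul, mul_one]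
      map_zero' := by simp
      map_add' := fun A B => Matrix.add_kronecker _ _ _ }
  refine (map_exp_matrix f ?_ A).symm
  change Continuous fun A : Matrix n n ℂ => A ⊗ₖ (1 : Matrix n n ℂ)
  refine continuous_matrix fun i j => ?_
  simp only [Matrix.kroneckerMap_apply]
  fun_prop

lemma exp_one_kron {n : Type*} [Fintype n] [DecidableEq n] (A : Matrix n n ℂ) :
    NormedSpace.exp ((1 : Matrix n n ℂ) ⊗ₖ A) = (1 : Matrix n n ℂ) ⊗ₖ NormedSpace.exp A := by
  let f : Matrix n n ℂ →+* Matrix (n × n) (n × n) ℂ :=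
    { toFun := fun A => (1 : Matrix n n ℂ) ⊗ₖ A
      map_one' := by simp
      map_mul' := fun A B => by rw [← Matrix.mul_kronecker_mul, mul_one]
      map_zero' := by simp
      map_add' := fun A B => Matrix.kronecker_add _ _ _ }
  refine (map_exp_matrix f ?_ A).symm
  change Continuous fun A : Matrix n n ℂ => (1 : Matrix n n ℂ) ⊗ₖ A
  refine continuous_matrix fun i j => ?_
  simp only [Matrix.kroneckerMap_apply]
  fun_prop

lemma exp_dup {n : Type*} [Fintype n] [DecidableEq n] (β : ℝ) (H : Matrix n n ℂ) :
    NormedSpace.exp ((-β) • (H ⊗ₖ (1 : Matrix n n ℂ) + (1 : Matrix n n ℂ) ⊗ₖ H)) =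
      NormedSpace.exp ((-β) • H) ⊗ₖ NormedSpace.exp ((-β) • H) := by
  rw [smul_add, ← Matrix.smul_kronecker, ← Matrix.kronecker_smul, Matrix.exp_add_of_commute,
    exp_kron_one, exp_one_kron, ← Matrix.mul_kronecker_mul, mul_one, one_mul]
  unfold Commute SemiconjBy
  rw [← Matrix.mul_kronecker_mul, ← Matrix.mul_kronecker_mul]
  simp

lemma herm_dup {n : Type*} [DecidableEq n] {H : Matrix n n ℂ} (h : H.IsHermitian) :
    (H ⊗ₖ (1 : Matrix n n ℂ) + (1 : Matrix n n ℂ) ⊗ₖ H).IsHermitian := by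
  unfold Matrix.IsHermitian at *
  rw [conjTranspose_add, conjTranspose_kronecker, conjTranspose_kronecker, h]
  simp

lemma DD_dup {n : Type*} [Fintype n] [DecidableEq n] (β : ℝ) {H : Matrix n n ℂ}
    (h : H.IsHermitian) (x : n × n) :
    DD β (H ⊗ₖ (1 : Matrix n n ℂ) + (1 : Matrix n n ℂ) ⊗ₖ H) x = DD β H x.1 * DD β H x.2 := by
  unfold DD
  rw [exp_dup, Matrix.kroneckerMap_apply, exp_diag_real β h, exp_diag_real β h,
    ← Complex.ofReal_mul, Complex.ofReal_re]
  rfl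

lemma Ev_dup {n ι : Type*} [Fintype n] [DecidableEq n] [Fintype ι] (β : ℝ) {H : Matrix n n ℂ}
    (h : H.IsHermitian) (c : ℝ) (a : ι → n → ℝ) :
    Ev β (H ⊗ₖ (1 : Matrix n n ℂ) + (1 : Matrix n n ℂ) ⊗ₖ H)
      (fun x => c * ∑ f, a f x.1 * a f x.2) = c * ∑ f, (Ev β H (a f)) ^ 2 := by
  unfold Ev
  simp only [DD_dup β h, Fintype.sum_prod_type]
  have hZ : ∑ x, ∑ y, DD β H x * DD β H y = (∑ x, DD β H x) ^ 2 := by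
    rw [sq, Finset.sum_mul_sum]
  have hA : ∑ x, ∑ y, DD β H x * DD β H y * (c * ∑ f, a f x * a f y) =
      c * ∑ f, (∑ x, DD β H x * a f x) ^ 2 := by
    have : ∀ f, (∑ x, DD β H x * a f x) ^ 2 =
        ∑ x, ∑ y, (DD β H x * a f x) * (DD β H y * a f y) := fun f => by
      rw [sq, Finset.sum_mul_sum]
    simp only [this]
    rw [Finset.sum_comm (s := (Finset.univ : Finset ι)), Finset.mul_sum]
    refine Finset.sum_congr rfl fun x _ => ?_
    rw [Finset.sum_comm (s := (Finset.univ : Finset ι)), Finset.mul_sum]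
    refine Finset.sum_congr rfl fun y _ => ?_
    simp only [Finset.mul_sum]
    refine Finset.sum_congr rfl fun f _ => ?_
    ring
  rw [hZ, hA, mul_div_assoc, Finset.sum_div]
  simp only [div_pow]

def aa {N p : ℕ} (f : Fin p → Fin N) (σ : Conf N) : ℝ := ∏ i, sg σ (f i)

lemma aa_abs {N p : ℕ} (f : Fin p → Fin N) (σ : Conf N) : |aa f σ| ≤ 1 := by
  unfold aa
  rw [Finset.abs_prod]
  refine Finset.prod_le_one (fun _ _ => abs_nonneg _) fun i _ => ?_
  unfold sg; split_ifs <;> simp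

lemma RN_pow (N p : ℕ) : RN N ^ p = diagonal fun x : Conf N × Conf N =>
    (((((N : ℝ) ^ p)⁻¹) * ∑ f : Fin p → Fin N, aa f x.1 * aa f x.2 : ℝ) : ℂ) := by
  have : RN N = diagonal fun x : Conf N × Conf N =>
      (((N : ℝ)⁻¹ * ∑ j, sg x.1 j * sg x.2 j : ℝ) : ℂ) := by
    unfold RN Sz
    ext x y
    simp only [sg_cast, Matrix.diagonal_kronecker_diagonal, Matrix.smul_apply, Matrix.sum_apply,
      Matrix.diagonal_apply]
    split_ifs <;> simp
  rw [this, Matrix.diagonal_pow]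
  congr 1
  funext x
  rw [Pi.pow_apply, ← Complex.ofReal_pow, mul_pow, Fintype.sum_pow, inv_pow]
  simp only [aa, Finset.prod_mul_distrib]

lemma SzProd_firstP (N p : ℕ) (hN : p ≤ N) :
    SzProd N (firstP N p) = diagonal fun σ => ((aa (Fin.castLE hN) σ : ℝ) : ℂ) := by
  unfold SzProd aa
  congr 1
  funext σ
  simp only [sg_cast]
  rw [← Complex.ofReal_prod]
  congr 1
  have : firstP N p = Finset.univ.map (Fin.castLEEmb hN) := by
    ext j
    simp only [firstP, Finset.mem_filter, Finset.mem_univ, true_and, Finset.mem_map]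
    constructor
    · intro hj; exact ⟨⟨j, hj⟩, by ext; simp⟩
    · rintro ⟨i, rfl⟩; simp
  rw [this, Finset.prod_map]
  rfl

lemma SzProd_eq (N : ℕ) (s : Finset (Fin N)) :
    SzProd N s = diagonal fun σ => ((∏ j ∈ s, sg σ j : ℝ) : ℂ) := by
  unfold SzProd
  simp only [sg_cast, Complex.ofReal_prod]

lemma flip_iff {N : ℕ} (σ τ : Conf N) (j : Fin N) :
    τ = Function.update σ j (1 - σ j) ↔ σ = Function.update τ j (1 - τ j) := by
  have : ∀ a : Fin 2, 1 - (1 - a) = a := by decide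
  constructor
  · rintro rfl
    simp [this]
  · rintro rfl
    simp [this]

lemma herm_Sx (N : ℕ) (j : Fin N) : (Sx N j).IsHermitian := by
  ext σ τ
  simp only [Sx, Matrix.conjTranspose_apply, Matrix.of_apply]
  simp only [flip_iff σ τ j]
  split_ifs <;> simp

lemma herm_SzProd (N : ℕ) (s : Finset (Fin N)) : (SzProd N s).IsHermitian := by
  rw [SzProd_eq]
  refine Matrix.isHermitian_diagonal_of_self_adjoint _ ?_
  funext σ
  simp

lemma herm_sum {n ι : Type*} (s : Finset ι) (A : ι → Matrix n n ℂ)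
    (h : ∀ i, (A i).IsHermitian) : (∑ i ∈ s, A i).IsHermitian := by
  unfold Matrix.IsHermitian at *
  rw [conjTranspose_sum]
  exact Finset.sum_congr rfl fun i _ => h i

lemma herm_HNp (N p : ℕ) (J b : ℝ) (g : Finset (Fin N) → ℝ) : (HNp N p J b g).IsHermitian := by
  unfold HNp UNp
  refine (herm_smul _ (herm_smul _ (herm_sum _ _ fun s => ?_))).sub
    (herm_smul _ (herm_sum _ _ fun j => herm_Sx N j))
  split_ifs
  · exact herm_smul _ (herm_SzProd N s)
  · exact Matrix.isHermitian_zero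

def cE {N : ℕ} (π : Equiv.Perm (Fin N)) : Conf N ≃ Conf N where
  toFun σ := fun j => σ (π j)
  invFun σ := fun j => σ (π.symm j)
  left_inv σ := by funext j; simp
  right_inv σ := by funext j; simp

lemma HNp_submatrix (N p : ℕ) (J b : ℝ) (g : Finset (Fin N) → ℝ) (π : Equiv.Perm (Fin N)) :
    (HNp N p J b g).submatrix (cE π) (cE π) =
      HNp N p J b (fun t => g (t.map π.symm.toEmbedding)) := by
  have h1 : ∑ s : Finset (Fin N), (if s.card = p then
        g s • (SzProd N s).submatrix (cE π) (cE π) else 0) =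
      ∑ s : Finset (Fin N), (if s.card = p then
        g (s.map π.symm.toEmbedding) • SzProd N s else 0) := by
    refine Fintype.sum_equiv (Equiv.finsetCongr π) _ _ fun s => ?_
    have e1 : (s.map π.toEmbedding).map π.symm.toEmbedding = s := by
      ext x; simp
    simp only [Equiv.finsetCongr_apply, Finset.card_map, e1]
    congr 2
    rw [SzProd_eq, SzProd_eq, Matrix.submatrix_diagonal _ _ (cE π).injective]
    congr 1
    funext σ
    simp [sg, cE]
  have h2 : ∑ j, (Sx N j).submatrix (cE π) (cE π) = ∑ j, Sx N j := by
    refine Fintype.sum_equiv π _ _ fun j => ?_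
    ext σ τ
    simp only [Sx, Matrix.submatrix_apply, Matrix.of_apply]
    have : cE π (Function.update σ (π j) (1 - σ (π j))) =
        Function.update (cE π σ) j (1 - cE π σ j) := by
      funext k
      by_cases hk : k = j
      · subst hk; simp [cE]
      · have hk' : π k ≠ π j := fun h => hk (π.injective h)
        simp [cE, Function.update_of_ne hk, Function.update_of_ne hk']
    simp only [← this, (cE π).injective.eq_iff]
  unfold HNp UNp
  conv_rhs => rw [← h1, ← h2]
  ext σ τ
  simp only [Matrix.submatrix_apply, Matrix.sub_apply, Matrix.smul_apply, Matrix.sum_apply]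
  congr 4
  funext s
  split_ifs <;> simp

lemma exp_submatrix {n : Type*} [Fintype n] [DecidableEq n] (e : n ≃ n) (A : Matrix n n ℂ) :
    (NormedSpace.exp A).submatrix e e = NormedSpace.exp (A.submatrix e e) := by
  refine map_exp_matrix ((Matrix.reindexAlgEquiv ℂ ℂ e.symm : _ ≃ₐ[ℂ] _) :
    Matrix n n ℂ →+* Matrix n n ℂ) ?_ A
  change Continuous fun A : Matrix n n ℂ => A.submatrix e e
  exact continuous_id.matrix_submatrix _ _

lemma Ev_perm (N p : ℕ) (β J b : ℝ) (g : Finset (Fin N) → ℝ) (π : Equiv.Perm (Fin N))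
    (f : Fin p → Fin N) :
    Ev β (HNp N p J b g) (aa f) =
      Ev β (HNp N p J b (fun t => g (t.map π.symm.toEmbedding))) (aa (fun i => π (f i))) := by
  have hD : ∀ σ, DD β (HNp N p J b (fun t => g (t.map π.symm.toEmbedding))) σ =
      DD β (HNp N p J b g) (cE π σ) := fun σ => by
    unfold DD
    rw [← HNp_submatrix]
    change (NormedSpace.exp (((-β) • HNp N p J b g).submatrix (cE π) (cE π)) σ σ).re = _
    rw [← exp_submatrix]
    rfl
  unfold Ev
  simp only [hD]
  congr 1
  · exact (Fintype.sum_equiv (cE π) _ _ fun σ => rfl).symm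
  · exact (Fintype.sum_equiv (cE π) _ _ fun σ => rfl).symm

/-- Extension by zero of the couplings. -/
def ext0 {N p : ℕ} (h : {t : Finset (Fin N) // t.card = p} → ℝ) (s : Finset (Fin N)) : ℝ :=
  if hs : s.card = p then h ⟨s, hs⟩ else 0

lemma HNp_ext0 (N p : ℕ) (J b : ℝ) (g : Finset (Fin N) → ℝ) :
    HNp N p J b g = HNp N p J b (ext0 fun s : {t : Finset (Fin N) // t.card = p} => g s.1) := by
  unfold HNp UNp
  congr 3
  refine Finset.sum_congr rfl fun s _ => ?_
  split_ifs with h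
  · simp [ext0, h]
  · rfl

lemma meas_Ev (N p : ℕ) (β J b : ℝ) (a : Conf N → ℝ) :
    Measurable fun h : {t : Finset (Fin N) // t.card = p} → ℝ =>
      Ev β (HNp N p J b (ext0 h)) a := by
  have hc : Continuous fun h : {t : Finset (Fin N) // t.card = p} → ℝ =>
      HNp N p J b (ext0 h) := by
    unfold HNp UNp
    apply Continuous.sub _ continuous_const
    apply Continuous.fun_const_smul
    apply Continuous.fun_const_smul
    refine continuous_finsetSum _ fun s _ => ?_
    split_ifs with hs
    · have : Continuous fun h : {t : Finset (Fin N) // t.card = p} → ℝ => ext0 h s := by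
        simp only [ext0, hs, dif_pos]
        fun_prop
      exact this.smul continuous_const
    · exact continuous_const
  have he : Continuous (NormedSpace.exp : Matrix (Conf N) (Conf N) ℂ → _) :=
    open scoped Norms.Operator in NormedSpace.exp_continuous
  have hD : ∀ σ, Measurable fun h : {t : Finset (Fin N) // t.card = p} → ℝ =>
      DD β (HNp N p J b (ext0 h)) σ := fun σ => by
    refine Continuous.measurable ?_
    unfold DD
    exact Complex.continuous_re.comp ((he.comp (hc.const_smul (-β))).matrix_elem σ σ)
  unfold Ev
  refine Measurable.div ?_ ?_
  · exact Finset.measurable_fun_sum _ fun σ _ => (hD σ).mul_const _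
  · exact Finset.measurable_fun_sum _ fun σ _ => hD σ

lemma card_inj (N p : ℕ) :
    (Finset.univ.filter fun f : Fin p → Fin N => Function.Injective f).card =
      N.descFactorial p := by
  classical
  rw [← Fintype.card_subtype, Fintype.card_congr (Equiv.subtypeInjectiveEquivEmbedding _ _),
    Fintype.card_embedding_eq]
  simp

theorem stmt17
    {Ω : Type*} [MeasurableSpace Ω] (μ : Measure Ω) [IsProbabilityMeasure μ]
    (p N : ℕ) (hp : 2 ≤ p) (hN : p ≤ N)
    (β J b : ℝ) (hβ : 0 < β) (hJ : 0 < J) (hb : 0 ≤ b)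
    (g : Ω → Finset (Fin N) → ℝ)
    (hmeas : ∀ s : Finset (Fin N), Measurable fun ω => g ω s)
    (hgauss : ∀ s : Finset (Fin N), s.card = p →
      Measure.map (fun ω => g ω s) μ = gaussianReal 0 1)
    (hindep : iIndepFun
      (fun (s : {t : Finset (Fin N) // t.card = p}) ω => g ω s.1) μ) :
    0 ≤ (∫ ω, gibbs β (Hdup N p J b (g ω)) (RN N ^ p) ∂μ)
          - alphaP N p * ∫ ω, (gibbs β (HNp N p J b (g ω)) (SzProd N (firstP N p))) ^ 2 ∂μ ∧
    (∫ ω, gibbs β (Hdup N p J b (g ω)) (RN N ^ p) ∂μ)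
          - alphaP N p * ∫ ω, (gibbs β (HNp N p J b (g ω)) (SzProd N (firstP N p))) ^ 2 ∂μ
      ≤ 1 - alphaP N p := by
  classical
  have hE1 : ∀ ω, gibbs β (Hdup N p J b (g ω)) (RN N ^ p) =
      ((N : ℝ) ^ p)⁻¹ * ∑ f : Fin p → Fin N, (Ev β (HNp N p J b (g ω)) (aa f)) ^ 2 := fun ω => by
    have hH := herm_HNp N p J b (g ω)
    rw [RN_pow, Hdup, gibbs_diag β (herm_dup hH), Ev_dup β hH]
  have hE2 : ∀ ω, gibbs β (HNp N p J b (g ω)) (SzProd N (firstP N p)) =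
      Ev β (HNp N p J b (g ω)) (aa (Fin.castLE hN)) := fun ω => by
    rw [SzProd_firstP N p hN, gibbs_diag β (herm_HNp N p J b (g ω))]
  simp only [hE1, hE2]
  have hm : Measurable fun ω => fun s : {t : Finset (Fin N) // t.card = p} => g ω s.1 :=
    measurable_pi_lambda _ fun s => hmeas s.1
  have hmE : ∀ f : Fin p → Fin N, Measurable fun ω => Ev β (HNp N p J b (g ω)) (aa f) :=
    fun f => by
      have := (meas_Ev N p β J b (aa f)).comp hm
      have e : (fun ω => Ev β (HNp N p J b (g ω)) (aa f)) =
          (fun h => Ev β (HNp N p J b (ext0 h)) (aa f)) ∘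
            fun ω => fun s : {t : Finset (Fin N) // t.card = p} => g ω s.1 := by
        funext ω
        simp only [Function.comp_apply]
        rw [← HNp_ext0]
      rw [e]
      exact this
  have hle : ∀ (f : Fin p → Fin N) ω, (Ev β (HNp N p J b (g ω)) (aa f)) ^ 2 ≤ 1 := fun f ω =>
    (sq_le_one_iff_abs_le_one _).2 (Ev_abs_le β (herm_HNp N p J b (g ω)) _ (aa_abs f))
  have hint : ∀ f : Fin p → Fin N,
      Integrable (fun ω => (Ev β (HNp N p J b (g ω)) (aa f)) ^ 2) μ := fun f => by
    refine Integrable.of_bound ((hmE f).pow_const 2).aestronglyMeasurable 1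
      (Filter.Eventually.of_forall fun ω => ?_)
    rw [Real.norm_of_nonneg (sq_nonneg _)]
    exact hle f ω
  rw [integral_const_mul, integral_finsetSum _ fun f _ => hint f]
  set I : (Fin p → Fin N) → ℝ := fun f => ∫ ω, (Ev β (HNp N p J b (g ω)) (aa f)) ^ 2 ∂μ with hI
  have hI0 : ∀ f, 0 ≤ I f := fun f => integral_nonneg fun ω => sq_nonneg _
  have hI1 : ∀ f, I f ≤ 1 := fun f => by
    have := integral_mono (hint f) (integrable_const (1 : ℝ)) (fun ω => hle f ω)
    simpa using this
  have hlaw : ∀ π : Equiv.Perm (Fin N),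
      μ.map (fun ω => fun s : {t : Finset (Fin N) // t.card = p} =>
        g ω (s.1.map π.toEmbedding)) = Measure.pi fun _ => gaussianReal 0 1 := fun π => by
    let k : {t : Finset (Fin N) // t.card = p} → {t : Finset (Fin N) // t.card = p} :=
      fun s => ⟨s.1.map π.toEmbedding, by rw [Finset.card_map]; exact s.2⟩
    have hk : Function.Injective k := fun s t h => by
      have := congrArg Subtype.val h
      exact Subtype.ext (Finset.map_injective _ this)
    have h1 := hindep.precomp hk
    have h2 := h1.map_fun_eq_pi_map fun s => (hmeas (k s).1).aemeasurable
    refine h2.trans ?_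
    congr 1
    funext s
    exact hgauss _ (k s).2
  have hsym : ∀ f : Fin p → Fin N, Function.Injective f → I f = I (Fin.castLE hN) := by
    intro f hf
    obtain ⟨π, hπ⟩ := Equiv.Perm.exists_extending_pair f (Fin.castLE hN) hf
      (Fin.castLE_injective hN)
    have key : ∀ ρ : Equiv.Perm (Fin N),
        ∫ ω, (Ev β (HNp N p J b (fun t => g ω (t.map ρ.toEmbedding)))
          (aa (Fin.castLE hN))) ^ 2 ∂μ =
        ∫ h, (Ev β (HNp N p J b (ext0 h)) (aa (Fin.castLE hN))) ^ 2
          ∂(Measure.pi fun _ : {t : Finset (Fin N) // t.card = p} => gaussianReal 0 1) := by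
      intro ρ
      rw [← hlaw ρ, integral_map]
      · refine integral_congr_ae (Filter.Eventually.of_forall fun ω => ?_)
        simp only
        rw [HNp_ext0]
      · exact (measurable_pi_lambda _ fun s => hmeas _).aemeasurable
      · exact ((meas_Ev N p β J b _).pow_const 2).aestronglyMeasurable
    have k1 := key π.symm
    have k2 := key (Equiv.refl _)
    have h3 : I f = ∫ ω, (Ev β (HNp N p J b (fun t => g ω (t.map π.symm.toEmbedding)))
          (aa (Fin.castLE hN))) ^ 2 ∂μ := by
      simp only [hI]
      refine integral_congr_ae (Filter.Eventually.of_forall fun ω => ?_)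
      simp only
      rw [Ev_perm N p β J b (g ω) π f, funext hπ]
    rw [h3, k1, ← k2]
    simp [hI, Equiv.refl_toEmbedding, Finset.map_refl]
  have hNpos : (0 : ℝ) < (N : ℝ) ^ p := by
    have : 0 < N := by omega
    positivity
  have hα : alphaP N p = ((N : ℝ) ^ p)⁻¹ * (N.descFactorial p : ℝ) := by
    unfold alphaP
    rw [← Nat.factorial_mul_descFactorial hN]
    have : (Nat.factorial (N - p) : ℝ) ≠ 0 := by positivity
    push_cast
    field_simp
  have hsplit : ∑ f, I f = (N.descFactorial p : ℝ) * I (Fin.castLE hN) +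
      ∑ f ∈ Finset.univ.filter (fun f : Fin p → Fin N => ¬ Function.Injective f), I f := by
    rw [← Finset.sum_filter_add_sum_filter_not Finset.univ
      (fun f : Fin p → Fin N => Function.Injective f)]
    congr 1
    rw [Finset.sum_congr rfl fun f hf => hsym f (Finset.mem_filter.1 hf).2, Finset.sum_const,
      nsmul_eq_mul]
    congr 2
    rw [← card_inj]
  have hcard : ((Finset.univ.filter
      (fun f : Fin p → Fin N => ¬ Function.Injective f)).card : ℝ) =
      (N : ℝ) ^ p - N.descFactorial p := by
    have h1 := Finset.card_filter_add_card_filter_not (s := Finset.univ)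
      (fun f : Fin p → Fin N => Function.Injective f)
    have h2 : (Finset.univ.filter fun f : Fin p → Fin N => Function.Injective f).card =
      N.descFactorial p := by rw [← card_inj]
    rw [h2] at h1
    simp only [Finset.card_univ, Fintype.card_fun, Fintype.card_fin] at h1
    have h3 : ((N.descFactorial p : ℝ)) + ((Finset.univ.filter
      (fun f : Fin p → Fin N => ¬ Function.Injective f)).card : ℝ) = (N : ℝ) ^ p := by
      exact_mod_cast h1
    linarith
  set T := ∑ f ∈ Finset.univ.filter (fun f : Fin p → Fin N => ¬ Function.Injective f), I f
  have hT0 : 0 ≤ T := Finset.sum_nonneg fun f _ => hI0 f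
  have hT1 : T ≤ (N : ℝ) ^ p - N.descFactorial p := by
    rw [← hcard]
    have := Finset.sum_le_card_nsmul (Finset.univ.filter
      (fun f : Fin p → Fin N => ¬ Function.Injective f)) I 1 fun f _ => hI1 f
    simpa using this
  have hdiff : ((N : ℝ) ^ p)⁻¹ * ∑ f, I f - alphaP N p * I (Fin.castLE hN) =
      ((N : ℝ) ^ p)⁻¹ * T := by
    rw [hsplit, hα]; ring
  change 0 ≤ ((N : ℝ) ^ p)⁻¹ * ∑ f, I f - alphaP N p * I (Fin.castLE hN) ∧
    ((N : ℝ) ^ p)⁻¹ * ∑ f, I f - alphaP N p * I (Fin.castLE hN) ≤ 1 - alphaP N p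
  rw [hdiff]
  refine ⟨by positivity, ?_⟩
  calc ((N : ℝ) ^ p)⁻¹ * T ≤ ((N : ℝ) ^ p)⁻¹ * ((N : ℝ) ^ p - N.descFactorial p) := by gcongr
    _ = 1 - alphaP N p := by
      rw [hα, mul_sub, inv_mul_cancel₀ hNpos.ne']
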